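/- Let S be a positive signature and let f, f' be reduced S-forests with f ≼ f'. Then the word of decorations of the internal nodes of f, read along the left-to-right preorder traversal of the trees of f taken from left to right, equals the corresponding decoration word of f'; in particular dg(f) = dg(f') and f and f' have the same number of internal nodes with each decoration. -/

import Mathlib

open scoped BigOperators

/-- An `S`-term over a signature given by a type `S` of generators with arity map `ar`. -/
inductive STerm (S : Type) (ar : S → ℕ) : Type
  | leaf : STerm S ar
  | node (g : S) (c : Fin (ar g) → STerm S ar) : STerm S ar

namespace STerm

variable {S : Type} {ar : S → ℕ}

/-- The arity of a term: its number of leaves. -/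
def arity : STerm S ar → ℕ
  | leaf => 1
  | node _ c => ∑ i, (c i).arity

/-- The degree of a term: its number of internal nodes. -/
def degree : STerm S ar → ℕ
  | leaf => 0
  | node _ c => 1 + ∑ i, (c i).degree

/-- The word of decorations of internal nodes along left-to-right preorder traversal. -/
def decs : STerm S ar → List S
  | leaf => []
  | node g c => g :: (List.ofFn fun i => (c i).decs).flatten

/-- Grafting `t⟨l⟩`: the `i`-th leaf (left-to-right) is replaced by the `i`-th entry of `l`. -/
def graftList : STerm S ar → List (STerm S ar) → STerm S ar
  | leaf, l => l.headD leaf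
  | node g c, l =>
      node g fun i =>
        (c i).graftList
          ((l.drop (∑ j : Fin (ar g), if (j : ℕ) < (i : ℕ) then (c j).arity else 0)).take
            (c i).arity)

/-- Grafting a term at the rightmost leaf. -/
def graftRight : STerm S ar → STerm S ar → STerm S ar
  | leaf, s => s
  | node g c, s => node g fun i => if (i : ℕ) = ar g - 1 then (c i).graftRight s else c i

/-- Grafting a term at the leftmost (first) leaf, i.e. `∘₁`. -/
def graftFirst : STerm S ar → STerm S ar → STerm S ar
  | leaf, s => s
  | node g c, s => node g fun i => if (i : ℕ) = 0 then (c i).graftFirst s else c i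

/-- Preorder traversal word: `none` for leaves, `some g` for an internal node decorated by `g`. -/
def preo : STerm S ar → List (Option S)
  | leaf => [none]
  | node g c => some g :: (List.ofFn fun i => (c i).preo).flatten

/-- The number of extremal leaves of a term: leaves which come after every internal
node in the preorder traversal. -/
def extremalCount (t : STerm S ar) : ℕ :=
  (t.preo.reverse.takeWhile fun o => o.isNone).length

/-- The list of edges `(i, j, i')` (`i'` is the `j`-th child of `i`, `j` being 1-based) between
internal nodes, internal nodes being numbered from `0` in preorder. -/
def edges : STerm S ar → List (ℕ × ℕ × ℕ)
  | leaf => []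
  | node g c =>
      (List.ofFn fun i : Fin (ar g) =>
        (match c i with
          | leaf => ([] : List (ℕ × ℕ × ℕ))
          | node _ _ =>
            [(0, (i : ℕ) + 1,
               1 + ∑ j : Fin (ar g), if (j : ℕ) < (i : ℕ) then (c j).degree else 0)]) ++
          (c i).edges.map fun e =>
            (e.1 + (1 + ∑ j : Fin (ar g), if (j : ℕ) < (i : ℕ) then (c j).degree else 0), e.2.1,
              e.2.2 + (1 + ∑ j : Fin (ar g), if (j : ℕ) < (i : ℕ) then (c j).degree else 0))).flatten

/-- The easterly wind move inside a term: a subterm rooted at an internal node which has an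
immediate left sibling is detached (replaced by a leaf) and grafted onto the rightmost leaf of
the subtree rooted at this left sibling. -/
inductive TermMove : STerm S ar → STerm S ar → Prop
  | here (g : S) (c : Fin (ar g) → STerm S ar) (j j' : Fin (ar g))
      (hj : (j' : ℕ) = (j : ℕ) + 1) (hne : c j' ≠ leaf) :
      TermMove (node g c)
        (node g (Function.update (Function.update c j ((c j).graftRight (c j'))) j' leaf))
  | child (g : S) (c : Fin (ar g) → STerm S ar) (i : Fin (ar g)) (t' : STerm S ar) :
      TermMove (c i) t' → TermMove (node g c) (node g (Function.update c i t'))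

end STerm
section Forest

variable {S : Type} {ar : S → ℕ}

/-- A forest is reduced when none of its trees is a leaf. -/
def IsReducedF (f : List (STerm S ar)) : Prop := ∀ t ∈ f, t ≠ STerm.leaf

/-- The easterly wind move on forests: either the root of a tree having an immediate left
sibling tree is detached and grafted onto the rightmost leaf of this left sibling, or a move
happens inside one of the trees. -/
inductive ForestMove : List (STerm S ar) → List (STerm S ar) → Prop
  | root (pre : List (STerm S ar)) (t t' : STerm S ar) (post : List (STerm S ar)) :
      t' ≠ STerm.leaf → ForestMove (pre ++ t :: t' :: post) (pre ++ t.graftRight t' :: post)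
  | tree (pre : List (STerm S ar)) (t t' : STerm S ar) (post : List (STerm S ar)) :
      STerm.TermMove t t' → ForestMove (pre ++ t :: post) (pre ++ t' :: post)

/-- The relation `≼`: reflexive and transitive closure of the easterly wind move. -/
def EWLe (f f' : List (STerm S ar)) : Prop := Relation.ReflTransGen ForestMove f f'

/-- Decoration word of a forest. -/
def forestDecs (f : List (STerm S ar)) : List S := (f.map STerm.decs).flatten

/-- Degree (number of internal nodes) of a forest. -/
def forestDeg (f : List (STerm S ar)) : ℕ := (f.map STerm.degree).sum

/-- Preorder indices (from 0) of the roots of the trees of a forest. -/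
def rootIdxs : List (STerm S ar) → List ℕ
  | [] => []
  | t :: r => 0 :: (rootIdxs r).map (· + t.degree)

/-- Edges between internal nodes of a forest, numbered in preorder from 0. -/
def forestEdges : List (STerm S ar) → List (ℕ × ℕ × ℕ)
  | [] => []
  | t :: r => t.edges ++ (forestEdges r).map fun e => (e.1 + t.degree, e.2.1, e.2.2 + t.degree)

/-- Grafting the terms of `l` onto the successive extremal leaves of `t`. -/
def underSub (t : STerm S ar) (l : List (STerm S ar)) : STerm S ar :=
  t.graftList (List.ofFn (n := t.arity) fun p =>
    if (p : ℕ) < t.arity - t.extremalCount then STerm.leaf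
    else l.getD ((p : ℕ) - (t.arity - t.extremalCount)) STerm.leaf)

/-- The under product `f' △ f''` of two forests. -/
def underP (f' f'' : List (STerm S ar)) : List (STerm S ar) :=
  match f'.getLast? with
  | none => f''
  | some t => f'.dropLast ++ underSub t (f''.take t.extremalCount) :: f''.drop t.extremalCount

/-- The term `ι g` of degree 1 whose root is decorated by `g`. -/
def iotaT (g : S) : STerm S ar := STerm.node g fun _ => STerm.leaf

/-- The minimal forest of the interval `W(w)`. -/
def fmin (w : List S) : List (STerm S ar) := w.map iotaT

/-- The maximal forest of the interval `W(w)`: `ι g₁ ∘₁ ι g₂ ∘₁ ⋯ ∘₁ ι g_ℓ`. -/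
def fmax : List S → List (STerm S ar)
  | [] => []
  | g :: gs => [(gs.map iotaT).foldl STerm.graftFirst (iotaT g)]

end Forest
section Alphabet

variable {S : Type} {ar : S → ℕ}

/-- An `S`-forest-like alphabet: a type endowed with a root relation, decoration relations,
and edge relations. -/
structure ForestAlphabet (S : Type) (A : Type) where
  Root : A → Prop
  Dec : S → A → Prop
  Edge : ℕ → A → A → Prop

/-- `f`-compatibility `w ⊩^A f` of a word `w` over a forest-like alphabet. -/
def ForestAlphabet.Compat {A : Type} (Al : ForestAlphabet S A) (w : List A)
    (f : List (STerm S ar)) : Prop :=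
  w.length = forestDeg f ∧
  (∀ (i : ℕ) (hi : i < w.length), i ∈ rootIdxs f → Al.Root (w.get ⟨i, hi⟩)) ∧
  (∀ (i : ℕ) (hi : i < w.length) (hd : i < (forestDecs f).length),
      Al.Dec ((forestDecs f).get ⟨i, hd⟩) (w.get ⟨i, hi⟩)) ∧
  (∀ p j q, (p, j, q) ∈ forestEdges f → ∀ (hp : p < w.length) (hq : q < w.length),
      Al.Edge j (w.get ⟨p, hp⟩) (w.get ⟨q, hq⟩))

/-- The disjoint sum of two forest-like alphabets. -/
def ForestAlphabet.dsum {A B : Type} (Al : ForestAlphabet S A) (Bl : ForestAlphabet S B) :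
    ForestAlphabet S (A ⊕ B) where
  Root := Sum.elim Al.Root Bl.Root
  Dec g := Sum.elim (Al.Dec g) (Bl.Dec g)
  Edge j x y :=
    match x, y with
    | Sum.inl a, Sum.inl a' => Al.Edge j a a'
    | Sum.inr b, Sum.inr b' => Bl.Edge j b b'
    | Sum.inl _, Sum.inr b => Bl.Root b
    | Sum.inr _, Sum.inl _ => False

/-- The alphabet `𝔸_S` with letters `a_{g,u}`, `g ∈ S`, `u ∈ ℕ*`. -/
def ASAlphabet (S : Type) : ForestAlphabet S (S × List ℕ) where
  Root a := ∃ ℓ, a.2 = List.replicate ℓ 0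
  Dec g a := a.1 = g
  Edge j a a' := ∃ ℓ, a'.2 = a.2 ++ j :: List.replicate ℓ 0

/-- The alphabet `A_ℕ` with letters `a_i`, `i ∈ ℕ`, where every letter is a root, every letter
has every decoration, and `a_i →_j a_{i'}` iff `i < i'`. -/
def ANAlphabet (S : Type) : ForestAlphabet S ℕ where
  Root _ := True
  Dec _ _ := True
  Edge _ i i' := i < i'

/-- The packing of a word of natural numbers. -/
def pck (w : List ℕ) : List ℕ :=
  w.map fun m => ((w.filter (· ≤ m)).dedup).length

end Alphabet
section Algebra

open scoped TensorProduct

variable {S : Type} {ar : S → ℕ}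

/-- Reduced `S`-terms. -/
abbrev RTerm (S : Type) (ar : S → ℕ) := {t : STerm S ar // t ≠ STerm.leaf}

/-- The map `rd` keeping the non-leaf entries of a sequence of terms. -/
def rdF : List (STerm S ar) → List (RTerm S ar)
  | [] => []
  | STerm.leaf :: r => rdF r
  | STerm.node g c :: r => ⟨STerm.node g c, fun h => nomatch h⟩ :: rdF r

/-- The natural Hopf algebra `N(S)` as a module: the monoid algebra of the free monoid on the
set of reduced `S`-terms. -/
abbrev NAlg (𝕂 : Type) [CommSemiring 𝕂] (S : Type) (ar : S → ℕ) :=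
  MonoidAlgebra 𝕂 (FreeMonoid (RTerm S ar))

/-- The basis element `E_f` of `N(S)` indexed by a reduced forest `f`. -/
noncomputable def EBasis (𝕂 : Type) [CommSemiring 𝕂] {S : Type} {ar : S → ℕ}
    (f : List (RTerm S ar)) : NAlg 𝕂 S ar :=
  MonoidAlgebra.of 𝕂 (FreeMonoid (RTerm S ar)) (FreeMonoid.ofList f)

/-- The coproduct `Δ` of `N(S)`, defined linearly on the basis by
`Δ E_f = Σ E_{rd(s₁…s_k)} ⊗ E_{rd(u₁…u_k)}`, the sum ranging over all factorizations
`t_m = s_m⟨ū_m⟩` of the entries of `f`. -/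
noncomputable def DeltaN (𝕂 : Type) [CommSemiring 𝕂] (S : Type) (ar : S → ℕ) :
    NAlg 𝕂 S ar →ₗ[𝕂] (NAlg 𝕂 S ar) ⊗[𝕂] (NAlg 𝕂 S ar) :=
  (Finsupp.lift ((NAlg 𝕂 S ar) ⊗[𝕂] (NAlg 𝕂 S ar)) 𝕂 (FreeMonoid (RTerm S ar)) fun m =>
    ∑ᶠ c ∈ {c : List (STerm S ar × List (STerm S ar)) |
        List.Forall₂ (fun p t => p.2.length = p.1.arity ∧ p.1.graftList p.2 = t.val) c
          (FreeMonoid.toList m)},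
      (EBasis 𝕂 (rdF (c.map Prod.fst))) ⊗ₜ[𝕂] (EBasis 𝕂 (rdF (c.flatMap Prod.snd)))) ∘ₗ
    (MonoidAlgebra.coeffLinearEquiv 𝕂).toLinearMap

end Algebra

/-! The preorder word of `t.graftRight s` is that of `t` followed by that of `s`, since in a
positive signature the rightmost leaf of `t` is the last vertex of its preorder traversal. Moving a
subterm onto the rightmost leaf of its left sibling therefore merges two consecutive factors of the
word and leaves an empty one behind, which does not change the concatenation. The degree is the
length of the word. -/

theorem flatten_ofFn_append_last {α : Type*} {n : ℕ} (hn : 0 < n) (F : Fin n → List α)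
    (s : List α) :
    (List.ofFn fun i : Fin n ↦ if (i : ℕ) = n - 1 then F i ++ s else F i).flatten =
      (List.ofFn F).flatten ++ s := by
  obtain ⟨m, rfl⟩ := Nat.exists_eq_add_one.2 hn
  have hne (i : Fin m) : (i : ℕ) ≠ m := i.is_lt.ne
  simp [List.ofFn_succ_last, hne, -List.ofFn_succ]

theorem flatten_set_append_set_nil {α : Type*} (L : List (List α)) (j : ℕ)
    (hj : j + 1 < L.length) :
    ((L.set j (L[j] ++ L[j + 1])).set (j + 1) []).flatten = L.flatten := by
  induction j generalizing L with
  | zero =>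
    match L, hj with
    | u :: v :: L, _ => simp
  | succ j ih =>
    match L, hj with
    | u :: L, hj => simpa using ih L (by simpa using hj)

theorem ofFn_update {α : Type*} {n : ℕ} (F : Fin n → α) (i : Fin n) (a : α) :
    List.ofFn (Function.update F i a) = (List.ofFn F).set i a := by
  simp [List.ofFn_eq_map, (List.nodup_finRange n).map_update]

theorem flatten_ofFn_update_append_update_nil {α : Type*} {n : ℕ} (F : Fin n → List α)
    {j j' : Fin n} (hj : (j' : ℕ) = j + 1) :
    (List.ofFn (Function.update (Function.update F j (F j ++ F j')) j' [])).flatten =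
      (List.ofFn F).flatten := by
  have hlen : (j : ℕ) + 1 < (List.ofFn F).length := by simp [← hj]
  simpa [ofFn_update, ← hj] using flatten_set_append_set_nil (List.ofFn F) j hlen

namespace STerm

variable {S : Type} {ar : S → ℕ}

theorem length_decs (t : STerm S ar) : t.decs.length = t.degree := by
  induction t with
  | leaf => rfl
  | node g c ih =>
    simp [decs, degree, List.length_flatten, List.map_ofFn, List.sum_ofFn, ih, add_comm]

theorem decs_node (g : S) (c : Fin (ar g) → STerm S ar) :
    (node g c).decs = g :: (List.ofFn (decs ∘ c)).flatten :=
  rfl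

theorem decs_graftRight (hpos : ∀ g : S, 0 < ar g) (t s : STerm S ar) :
    (t.graftRight s).decs = t.decs ++ s.decs := by
  induction t with
  | leaf => rfl
  | node g c ih =>
    simp only [graftRight, decs, apply_ite decs, ih, flatten_ofFn_append_last (hpos g),
      List.cons_append]

theorem TermMove.decs_eq (hpos : ∀ g : S, 0 < ar g) {t t' : STerm S ar} (h : TermMove t t') :
    t.decs = t'.decs := by
  induction h with
  | here g c j j' hj _ =>
    have hflatten := flatten_ofFn_update_append_update_nil (decs ∘ c) hj
    simp only [decs_node, Function.comp_update, decs_graftRight hpos]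
    exact congrArg (g :: ·) hflatten.symm
  | child g c i t' _ ih =>
    have hword : Function.update (decs ∘ c) i t'.decs = decs ∘ c := by
      rw [← ih, ← Function.comp_update, Function.update_eq_self]
    rw [decs_node, decs_node, Function.comp_update, hword]

end STerm

section Forest

variable {S : Type} {ar : S → ℕ}

theorem length_forestDecs (f : List (STerm S ar)) : (forestDecs f).length = forestDeg f := by
  simp [forestDecs, forestDeg, List.length_flatten, Function.comp_def, STerm.length_decs]

theorem ForestMove.forestDecs_eq (hpos : ∀ g : S, 0 < ar g) {f f' : List (STerm S ar)}
    (h : ForestMove f f') : forestDecs f = forestDecs f' := by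
  cases h with
  | root pre t t' post _ => simp [forestDecs, STerm.decs_graftRight hpos]
  | tree pre t t' post h => simp [forestDecs, h.decs_eq hpos]

theorem easterly_wind_preserves_decorations_general (hpos : ∀ g : S, 0 < ar g)
    {f f' : List (STerm S ar)} (h : EWLe f f') :
    forestDecs f = forestDecs f' ∧ forestDeg f = forestDeg f' := by
  have hdecs : forestDecs f = forestDecs f' := by
    induction h with
    | refl => rfl
    | tail _ hmove ih => exact ih.trans (hmove.forestDecs_eq hpos)
  exact ⟨hdecs, by rw [← length_forestDecs, ← length_forestDecs, hdecs]⟩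

end Forest

/-- the relation `≼` preserves the decoration word of reduced forests (read
in preorder, trees from left to right); in particular it preserves the degree. -/
theorem easterly_wind_preserves_decorations {S : Type} {ar : S → ℕ}
    (hpos : ∀ g : S, 0 < ar g) (f f' : List (STerm S ar))
    (hf : IsReducedF f) (hf' : IsReducedF f') (h : EWLe f f') :
    forestDecs f = forestDecs f' ∧ forestDeg f = forestDeg f' :=
  easterly_wind_preserves_decorations_general hpos h
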